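/- The subgroup T of G generated by {i, w} (the binary tetrahedral group) has order 24, is a normal subgroup of G of index 2, and the quotient group G/T is a cyclic group of order 2. -/

import Mathlib

open Matrix Complex
open scoped MatrixGroups

noncomputable section

def iM : Matrix (Fin 2) (Fin 2) ℂ := !![0, 1; -1, 0]
def jM : Matrix (Fin 2) (Fin 2) ℂ := !![0, Complex.I; Complex.I, 0]
def kM : Matrix (Fin 2) (Fin 2) ℂ := !![Complex.I, 0; 0, -Complex.I]
def wM : Matrix (Fin 2) (Fin 2) ℂ :=
  (1 / 2 : ℂ) • !![-1 + Complex.I, 1 + Complex.I; -1 + Complex.I, -1 - Complex.I]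
def cM : Matrix (Fin 2) (Fin 2) ℂ :=
  ((Real.sqrt 2 : ℂ))⁻¹ • !![-Complex.I, Complex.I; Complex.I, Complex.I]
def dM : Matrix (Fin 2) (Fin 2) ℂ :=
  ((Real.sqrt 2 : ℂ))⁻¹ • !![-1, 1; 1, 1]

def G : Subgroup (GL (Fin 2) ℂ) :=
  Subgroup.closure {g : GL (Fin 2) ℂ |
    (g : Matrix (Fin 2) (Fin 2) ℂ) = iM ∨
    (g : Matrix (Fin 2) (Fin 2) ℂ) = wM ∨
    (g : Matrix (Fin 2) (Fin 2) ℂ) = dM}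

def T : Subgroup G :=
  Subgroup.closure {g : G |
    ((g : GL (Fin 2) ℂ) : Matrix (Fin 2) (Fin 2) ℂ) = iM ∨
    ((g : GL (Fin 2) ℂ) : Matrix (Fin 2) (Fin 2) ℂ) = wM}

/-- The proposition that the quotient of `Γ` by the normal subgroup `K`
is a cyclic group of order 2. -/
def QuotIsCyclicOfOrderTwo {Γ : Type} [Group Γ] (K : Subgroup Γ) (hK : K.Normal) : Prop := by
  letI := hK
  exact IsCyclic (Γ ⧸ K) ∧ Nat.card (Γ ⧸ K) = 2

/-- Integer quadruples `(a,b,c,d)` encode the quaternion `(a + b i + c j + d k)/2`. -/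
abbrev Quad : Type := ℤ × ℤ × ℤ × ℤ

/-- Twice the coordinates of the product quaternion. -/
def rawMul : Quad → Quad → Quad := fun (a, b, c, d) (a', b', c', d') =>
  (a * a' - b * b' - c * c' - d * d', a * b' + b * a' + c * d' - d * c',
   a * c' - b * d' + c * a' + d * b', a * d' + b * c' - c * b' + d * a')

def half : Quad → Quad := fun (a, b, c, d) => (a / 2, b / 2, c / 2, d / 2)

def dbl : Quad → Quad := fun (a, b, c, d) => (2 * a, 2 * b, 2 * c, 2 * d)

def qmul (x y : Quad) : Quad := half (rawMul x y)

def conjQ : Quad → Quad := fun (a, b, c, d) => (a, -b, -c, -d)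

/-- Conjugation by `dM`. -/
def twist : Quad → Quad := fun (a, b, c, d) => (a, -b, -d, -c)

/-- The doubled Hurwitz units. -/
def units24 : Finset Quad :=
  ((({1, -1} : Finset ℤ) ×ˢ ({1, -1} : Finset ℤ) ×ˢ ({1, -1} : Finset ℤ) ×ˢ ({1, -1} : Finset ℤ))) ∪
  {(2, 0, 0, 0), (-2, 0, 0, 0), (0, 2, 0, 0), (0, -2, 0, 0),
   (0, 0, 2, 0), (0, 0, -2, 0), (0, 0, 0, 2), (0, 0, 0, -2)}

theorem units24_card : units24.card = 24 := by decide +kernel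

theorem units24_mul : ∀ x ∈ units24, ∀ y ∈ units24,
    qmul x y ∈ units24 ∧ dbl (qmul x y) = rawMul x y := by decide +kernel

theorem units24_conj : ∀ x ∈ units24, conjQ x ∈ units24 ∧ qmul x (conjQ x) = (2, 0, 0, 0) := by
  decide +kernel

theorem units24_twist : ∀ x ∈ units24, twist x ∈ units24 := by decide +kernel

def norm4 : Quad → ℤ := fun (a, b, c, d) => a * a + b * b + c * c + d * d

theorem units24_norm : ∀ x ∈ units24, norm4 x = 4 := by decide +kernel

def qone : Quad := (2, 0, 0, 0)
def qi : Quad := (0, 2, 0, 0)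
def qw : Quad := (-1, 1, 1, 1)

def qpow (x : Quad) : ℕ → Quad
  | 0 => qone
  | n + 1 => qmul (qpow x n) x

/-- Every unit is a word in `i` and `w`. -/
theorem units24_gen : ∀ x ∈ units24, ∃ a ∈ Finset.range 4, ∃ b ∈ Finset.range 3,
    ∃ c ∈ Finset.range 4, ∃ e ∈ Finset.range 3,
    x = qmul (qmul (qpow qi a) (qpow qw b)) (qmul (qpow qi c) (qpow qw e)) := by decide +kernel

def phi : Quad → Matrix (Fin 2) (Fin 2) ℂ := fun (a, b, c, d) =>
  (1 / 2 : ℂ) • !![(a : ℂ) + d * I, b + c * I; -b + c * I, a - d * I]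

theorem phi_raw (x y : Quad) : phi x * phi y = (1 / 2 : ℂ) • phi (rawMul x y) := by
  obtain ⟨a, b, c, d⟩ := x
  obtain ⟨a', b', c', d'⟩ := y
  have hI : I * I = -1 := I_mul_I
  ext i j
  fin_cases i <;> fin_cases j <;> simp [phi, rawMul, Matrix.mul_apply, Fin.sum_univ_two] <;>
    ring_nf <;> simp only [I_sq] <;> ring

theorem phi_dbl (x : Quad) : phi (dbl x) = (2 : ℂ) • phi x := by
  obtain ⟨a, b, c, d⟩ := x
  ext i j
  fin_cases i <;> fin_cases j <;> simp [phi, dbl] <;> ring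

theorem phi_mul {x y : Quad} (hx : x ∈ units24) (hy : y ∈ units24) :
    phi x * phi y = phi (qmul x y) := by
  rw [phi_raw, ← (units24_mul x hx y hy).2, phi_dbl, smul_smul]
  norm_num

theorem phi_one : phi (2, 0, 0, 0) = 1 := by
  ext i j
  fin_cases i <;> fin_cases j <;> simp [phi]

theorem phi_i : phi qi = iM := by
  ext i j
  fin_cases i <;> fin_cases j <;> simp [phi, qi, iM]

theorem phi_w : phi qw = wM := by
  ext i j
  fin_cases i <;> fin_cases j <;> simp [phi, qw, wM]

theorem sqrt_inv_sq : ((Real.sqrt 2 : ℂ))⁻¹ * ((Real.sqrt 2 : ℂ))⁻¹ = 1 / 2 := by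
  rw [← mul_inv, ← Complex.ofReal_mul, Real.mul_self_sqrt (by norm_num)]
  norm_num

theorem dM_sq : dM * dM = 1 := by
  simp only [dM, Matrix.smul_mul, Matrix.mul_smul, smul_smul, sqrt_inv_sq]
  ext i j
  fin_cases i <;> fin_cases j <;> simp [Matrix.mul_apply, Fin.sum_univ_two] <;> norm_num

theorem dM_phi (x : Quad) : dM * phi x = phi (twist x) * dM := by
  obtain ⟨a, b, c, d⟩ := x
  ext i j
  fin_cases i <;> fin_cases j <;> simp [phi, twist, dM, Matrix.mul_apply, Fin.sum_univ_two] <;> ring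

theorem det_dM : dM.det = -1 := by
  have h := sqrt_inv_sq
  simp only [dM, Matrix.det_fin_two, Matrix.smul_apply, smul_eq_mul]
  simp only [Matrix.of_apply, Matrix.cons_val', Matrix.cons_val_zero, Matrix.cons_val_one,
    Matrix.cons_val_fin_one]
  linear_combination (-2) * h

theorem det_phi {x : Quad} (hx : x ∈ units24) : (phi x).det = 1 := by
  have h := units24_norm x hx
  obtain ⟨a, b, c, d⟩ := x
  have h' : (a : ℂ) * a + b * b + c * c + d * d = 4 := by exact_mod_cast h
  simp only [phi, Matrix.det_fin_two, Matrix.smul_apply, smul_eq_mul]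
  simp only [Matrix.of_apply, Matrix.cons_val', Matrix.cons_val_zero, Matrix.cons_val_one,
    Matrix.cons_val_fin_one]
  linear_combination (1 / 4) * h' - (1 / 4) * ((d : ℂ) * d + c * c) * I_mul_I

theorem phi_injective : Function.Injective phi := by
  rintro ⟨a, b, c, d⟩ ⟨a', b', c', d'⟩ h
  have h0 := congrFun (congrFun h 0) 0
  have h1 := congrFun (congrFun h 0) 1
  have r0 := congrArg Complex.re h0
  have i0 := congrArg Complex.im h0
  have r1 := congrArg Complex.re h1
  have i1 := congrArg Complex.im h1
  simp [phi] at r0 i0 r1 i1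
  simp [r0, i0, r1, i1]

/-- The matrix of an element of `G`. -/
def mat (g : G) : Matrix (Fin 2) (Fin 2) ℂ := ((g : GL (Fin 2) ℂ) : Matrix (Fin 2) (Fin 2) ℂ)

theorem mat_injective : Function.Injective mat := fun _ _ h => Subtype.ext (Units.ext h)

theorem mat_mul (g h : G) : mat (g * h) = mat g * mat h := by simp [mat]

theorem mat_one : mat 1 = 1 := by simp [mat]

theorem mat_inv {g : G} {A : Matrix (Fin 2) (Fin 2) ℂ} (h : mat g * A = 1) : mat g⁻¹ = A := by
  have h1 : mat g⁻¹ * mat g = 1 := by rw [← mat_mul, inv_mul_cancel, mat_one]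
  calc mat g⁻¹ = mat g⁻¹ * (mat g * A) := by rw [h, mul_one]
    _ = A := by rw [← mul_assoc, h1, one_mul]

theorem one_mem : (2, 0, 0, 0) ∈ units24 := by decide +kernel
theorem qi_mem : qi ∈ units24 := by decide +kernel
theorem qw_mem : qw ∈ units24 := by decide +kernel

theorem phi_conj {x : Quad} (hx : x ∈ units24) : phi x * phi (conjQ x) = 1 := by
  rw [phi_mul hx (units24_conj x hx).1, (units24_conj x hx).2, phi_one]

theorem T_sub (g : G) (hg : g ∈ T) : ∃ x ∈ units24, mat g = phi x := by
  induction hg using Subgroup.closure_induction with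
  | mem g h =>
    rcases h with h | h
    · exact ⟨qi, qi_mem, h.trans phi_i.symm⟩
    · exact ⟨qw, qw_mem, h.trans phi_w.symm⟩
  | one => exact ⟨_, one_mem, mat_one.trans phi_one.symm⟩
  | mul g h _ _ ih1 ih2 =>
    obtain ⟨x, hx, ex⟩ := ih1
    obtain ⟨y, hy, ey⟩ := ih2
    exact ⟨_, (units24_mul x hx y hy).1, by rw [mat_mul, ex, ey, phi_mul hx hy]⟩
  | inv g _ ih =>
    obtain ⟨x, hx, ex⟩ := ih
    exact ⟨_, (units24_conj x hx).1, mat_inv (by rw [ex, phi_conj hx])⟩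

/-- An element of `GL` from an involutive-type pair of matrices. -/
theorem exists_gen_i : ∃ g ∈ T, mat g = phi qi := by
  let u : GL (Fin 2) ℂ := Matrix.GeneralLinearGroup.mkOfDetNeZero iM
    (by rw [← phi_i, det_phi qi_mem]; exact one_ne_zero)
  exact ⟨⟨u, Subgroup.subset_closure (Or.inl rfl)⟩, Subgroup.subset_closure (Or.inl rfl), phi_i.symm⟩

theorem exists_gen_w : ∃ g ∈ T, mat g = phi qw := by
  let u : GL (Fin 2) ℂ := Matrix.GeneralLinearGroup.mkOfDetNeZero wM
    (by rw [← phi_w, det_phi qw_mem]; exact one_ne_zero)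
  exact ⟨⟨u, Subgroup.subset_closure (Or.inr (Or.inl rfl))⟩, Subgroup.subset_closure (Or.inr rfl),
    phi_w.symm⟩

theorem exists_gen_d : ∃ g : G, mat g = dM := by
  let u : GL (Fin 2) ℂ := Matrix.GeneralLinearGroup.mkOfDetNeZero dM
    (by rw [det_dM]; norm_num)
  exact ⟨⟨u, Subgroup.subset_closure (Or.inr (Or.inr rfl))⟩, rfl⟩

/-- `x` is a unit realized by an element of `T`. -/
def Real24 (x : Quad) : Prop := x ∈ units24 ∧ ∃ g ∈ T, mat g = phi x

theorem Real24.mul {x y : Quad} (hx : Real24 x) (hy : Real24 y) : Real24 (qmul x y) := by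
  obtain ⟨hx, g, hg, eg⟩ := hx
  obtain ⟨hy, h, hh, eh⟩ := hy
  exact ⟨(units24_mul x hx y hy).1, g * h, T.mul_mem hg hh, by rw [mat_mul, eg, eh, phi_mul hx hy]⟩

theorem Real24.pow {x : Quad} (hx : Real24 x) (n : ℕ) : Real24 (qpow x n) := by
  induction n with
  | zero => exact ⟨one_mem, 1, T.one_mem, mat_one.trans phi_one.symm⟩
  | succ n ih => exact ih.mul hx

theorem real24_all {x : Quad} (hx : x ∈ units24) : Real24 x := by
  have hi : Real24 qi := ⟨qi_mem, exists_gen_i⟩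
  have hw : Real24 qw := ⟨qw_mem, exists_gen_w⟩
  obtain ⟨a, -, b, -, c, -, e, -, rfl⟩ := units24_gen x hx
  exact ((hi.pow a).mul (hw.pow b)).mul ((hi.pow c).mul (hw.pow e))

theorem mem_T_iff (g : G) : g ∈ T ↔ ∃ x ∈ units24, mat g = phi x := by
  refine ⟨T_sub g, ?_⟩
  rintro ⟨x, hx, ex⟩
  obtain ⟨-, h, hh, eh⟩ := real24_all hx
  rwa [mat_injective (ex.trans eh.symm)]

theorem card_T : Nat.card T = 24 := by
  have himg : mat '' (T : Set G) = phi '' (units24 : Set Quad) := by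
    ext A
    constructor
    · rintro ⟨g, hg, rfl⟩
      obtain ⟨x, hx, ex⟩ := T_sub g hg
      exact ⟨x, hx, ex.symm⟩
    · rintro ⟨x, hx, rfl⟩
      exact (real24_all hx).2
  have h1 := Set.ncard_image_of_injective (T : Set G) mat_injective
  rw [himg, Set.ncard_image_of_injective _ phi_injective, Set.ncard_coe_finset, units24_card] at h1
  exact h1.symm

/-- Matrices of the form `φ(x)` or `φ(x) d`. -/
def InCosets (A : Matrix (Fin 2) (Fin 2) ℂ) : Prop :=
  ∃ x ∈ units24, A = phi x ∨ A = phi x * dM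

theorem InCosets.mul {A B : Matrix (Fin 2) (Fin 2) ℂ} (hA : InCosets A) (hB : InCosets B) :
    InCosets (A * B) := by
  obtain ⟨x, hx, hA⟩ := hA
  obtain ⟨y, hy, hB⟩ := hB
  have hy' := units24_twist y hy
  rcases hA with rfl | rfl <;> rcases hB with rfl | rfl
  · exact ⟨_, (units24_mul x hx y hy).1, Or.inl (phi_mul hx hy)⟩
  · exact ⟨_, (units24_mul x hx y hy).1, Or.inr (by rw [← mul_assoc, phi_mul hx hy])⟩
  · exact ⟨_, (units24_mul x hx _ hy').1, Or.inr (by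
      rw [mul_assoc, dM_phi, ← mul_assoc, phi_mul hx hy'])⟩
  · exact ⟨_, (units24_mul x hx _ hy').1, Or.inl (by
      rw [mul_assoc, ← mul_assoc dM, dM_phi, mul_assoc _ dM, dM_sq, mul_one, phi_mul hx hy'])⟩

theorem inCosets_d : InCosets dM := ⟨_, one_mem, Or.inr (by rw [phi_one, one_mul])⟩

theorem InCosets.inv {A : Matrix (Fin 2) (Fin 2) ℂ} (hA : InCosets A) :
    ∃ B, InCosets B ∧ A * B = 1 := by
  obtain ⟨x, hx, rfl | rfl⟩ := hA
  · exact ⟨_, ⟨_, (units24_conj x hx).1, Or.inl rfl⟩, phi_conj hx⟩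
  · refine ⟨dM * phi (conjQ x), inCosets_d.mul ⟨_, (units24_conj x hx).1, Or.inl rfl⟩, ?_⟩
    rw [mul_assoc, ← mul_assoc dM, dM_sq, one_mul, phi_conj hx]

theorem G_sub (g : GL (Fin 2) ℂ) (hg : g ∈ G) : InCosets (g : Matrix (Fin 2) (Fin 2) ℂ) := by
  induction hg using Subgroup.closure_induction with
  | mem g h =>
    rcases h with h | h | h
    · exact ⟨qi, qi_mem, Or.inl (h.trans phi_i.symm)⟩
    · exact ⟨qw, qw_mem, Or.inl (h.trans phi_w.symm)⟩
    · rw [h]; exact inCosets_d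
  | one => exact ⟨_, one_mem, Or.inl phi_one.symm⟩
  | mul g h _ _ ih1 ih2 => exact ih1.mul ih2
  | inv g hg ih =>
    obtain ⟨B, hB, e⟩ := ih.inv
    have : mat (⟨g, hg⟩ : G)⁻¹ = B := mat_inv e
    rw [← this] at hB
    exact hB

theorem index_T : T.index = 2 := by
  obtain ⟨d, hd⟩ := exists_gen_d
  rw [Subgroup.index_eq_two_iff]
  refine ⟨d, fun b => ?_⟩
  have key : ∀ g ∈ T, (mat g).det = 1 := by
    intro g hg
    obtain ⟨x, hx, ex⟩ := T_sub g hg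
    rw [ex, det_phi hx]
  obtain ⟨x, hx, e | e⟩ : InCosets (mat b) := G_sub b b.2
  · refine Or.inr ⟨(mem_T_iff b).2 ⟨x, hx, e⟩, fun h => ?_⟩
    have := key _ h
    rw [mat_mul, Matrix.det_mul, e, hd, det_dM, det_phi hx] at this
    norm_num at this
  · refine Or.inl ⟨(mem_T_iff _).2 ⟨x, hx, ?_⟩, fun h => ?_⟩
    · rw [mat_mul, e, hd, mul_assoc, dM_sq, mul_one]
    · have := key _ h
      rw [e, Matrix.det_mul, det_dM, det_phi hx] at this
      norm_num at this

theorem binary_tetrahedral_normal_of_index_two :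
    Nat.card T = 24 ∧
    T.index = 2 ∧
    ∃ hT : T.Normal, QuotIsCyclicOfOrderTwo T hT := by
  refine ⟨card_T, index_T, Subgroup.normal_of_index_eq_two index_T, ?_⟩
  letI : T.Normal := Subgroup.normal_of_index_eq_two index_T
  have hc : Nat.card (G ⧸ T) = 2 := index_T
  haveI : Fact (Nat.Prime 2) := ⟨Nat.prime_two⟩
  exact ⟨isCyclic_of_prime_card hc, hc⟩
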